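/- Let functions M_k : ℝ → ℝ (k ≥ 1) be smooth and satisfy M_k'(s) = -k M_k(s) - M_{k+1}(s) for all s. Define φ(s) := M_0(s) with M_0'(s) = -M_1(s). Then for every k ≥ 1, (-1)^k φ^{(k)}(0) = ∑_{l=1}^k a_l^{(k)} M_l(0), where a_l^{(k)} are defined by a_1^{(k)} = 1, a_k^{(k)} = 1, and a_l^{(k)} = a_{l-1}^{(k-1)} + l·a_l^{(k-1)} for 2 ≤ l ≤ k-1. -/

import Mathlib

/-!
The operator `-d/ds` sends `M l` to `l • M l + M (l + 1)`, for `l = 0` as well. The Stirling numbers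
of the second kind satisfy the transposed recursion `S(n+1, l) = l * S(n, l) + S(n, l-1)`, so
`(-d/ds)ⁿ (M 0) = ∑ l, S(n, l) • M l`. The triangle `a l k` obeys the same recursion with the same
boundary values, hence `a l k = S(k, l)`.
-/

open Finset
open Nat (stirlingSecond)

theorem eq_stirlingSecond_of_rec {R : Type*} [NonAssocSemiring R] {a : ℕ → ℕ → R}
    (ha1 : ∀ k, 1 ≤ k → a 1 k = 1) (hak : ∀ k, 1 ≤ k → a k k = 1)
    (harec : ∀ k l, 2 ≤ l → l < k → a l k = a (l - 1) (k - 1) + l * a l (k - 1))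
    {k l : ℕ} (hl : 1 ≤ l) (hlk : l ≤ k) : a l k = stirlingSecond k l := by
  induction k generalizing l with
  | zero => omega
  | succ n ih =>
    obtain rfl | two_le := hl.eq_or_lt
    · rw [ha1 _ hlk, Nat.stirlingSecond_one_right, Nat.cast_one]
    obtain rfl | l_lt := hlk.eq_or_lt
    · rw [hak _ hl, Nat.stirlingSecond_self, Nat.cast_one]
    rw [harec _ _ two_le l_lt, Nat.add_sub_cancel, ih (by omega) (by omega),
      ih hl (Nat.le_of_lt_succ l_lt), Nat.stirlingSecond_succ_left _ _ (by omega), add_comm,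
      Nat.cast_add, Nat.cast_mul]

theorem sum_stirlingSecond_succ_nsmul {V : Type*} [AddCommMonoid V] (e : ℕ → V) (n : ℕ) :
    ∑ l ∈ range (n + 2), stirlingSecond (n + 1) l • e l =
      ∑ l ∈ range (n + 1), stirlingSecond n l • (l • e l + e (l + 1)) := by
  have sum_shift : ∑ l ∈ range (n + 1), (stirlingSecond n (l + 1) * (l + 1)) • e (l + 1) =
      ∑ l ∈ range (n + 1), (stirlingSecond n l * l) • e l := by
    rw [sum_range_succ, sum_range_succ', Nat.stirlingSecond_eq_zero_of_lt n.lt_succ_self]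
    simp only [zero_mul, mul_zero, zero_smul]
  calc ∑ l ∈ range (n + 2), stirlingSecond (n + 1) l • e l
      = ∑ l ∈ range (n + 1), ((stirlingSecond n (l + 1) * (l + 1)) • e (l + 1) +
          stirlingSecond n l • e (l + 1)) := by
        rw [sum_range_succ', Nat.stirlingSecond_succ_zero, zero_smul, add_zero]
        simp only [Nat.stirlingSecond_succ_succ, add_smul, mul_comm]
    _ = ∑ l ∈ range (n + 1), stirlingSecond n l • (l • e l + e (l + 1)) := by
        rw [sum_add_distrib, sum_shift, ← sum_add_distrib]
        simp only [smul_add, mul_smul]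

section

variable {𝕜 E : Type*} [NontriviallyNormedField 𝕜] [NormedAddCommGroup E] [NormedSpace 𝕜 E]

theorem iteratedDeriv_eq_sum_stirlingSecond {M : ℕ → 𝕜 → E}
    (hM : ∀ l s, HasDerivAt (M l) (-(l • M l s + M (l + 1) s)) s) (n : ℕ) (s : 𝕜) :
    iteratedDeriv n (M 0) s =
      (-1 : 𝕜) ^ n • ∑ l ∈ range (n + 1), stirlingSecond n l • M l s := by
  induction n generalizing s with
  | zero => simp
  | succ n ih =>
    have hasDerivAt_sum : HasDerivAt (fun t ↦ ∑ l ∈ range (n + 1), stirlingSecond n l • M l t)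
        (-∑ l ∈ range (n + 2), stirlingSecond (n + 1) l • M l s) s := by
      rw [sum_stirlingSecond_succ_nsmul (M · s), ← sum_neg_distrib]
      simp only [← smul_neg]
      exact .fun_sum fun l _ ↦ (hM l s).fun_const_smul _
    rw [iteratedDeriv_succ, funext ih, (hasDerivAt_sum.fun_const_smul _).deriv, pow_succ,
      mul_neg_one, neg_smul, smul_neg]

theorem stmt4_general (M : ℕ → 𝕜 → E) (hdiff : ∀ k, Differentiable 𝕜 (M k))
    (hrec : ∀ k, 1 ≤ k → ∀ s, deriv (M k) s = -(k : 𝕜) • M k s - M (k + 1) s)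
    (h0 : ∀ s, deriv (M 0) s = -(M 1 s))
    (a : ℕ → ℕ → 𝕜)
    (ha1 : ∀ k, 1 ≤ k → a 1 k = 1)
    (hak : ∀ k, 1 ≤ k → a k k = 1)
    (harec : ∀ k l, 2 ≤ l → l < k → a l k = a (l - 1) (k - 1) + l * a l (k - 1))
    (k : ℕ) (hk : 1 ≤ k) (s : 𝕜) :
    (-1 : 𝕜) ^ k • iteratedDeriv k (M 0) s = ∑ l ∈ Icc 1 k, a l k • M l s := by
  have hM (l : ℕ) (t : 𝕜) : HasDerivAt (M l) (-(l • M l t + M (l + 1) t)) t := by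
    convert (hdiff l t).hasDerivAt using 1
    obtain rfl | hl := l.eq_zero_or_pos
    · rw [h0, zero_smul, zero_add]
    · rw [hrec l hl, neg_smul, Nat.cast_smul_eq_nsmul, neg_add']
  calc (-1 : 𝕜) ^ k • iteratedDeriv k (M 0) s
      = ∑ l ∈ range (k + 1), stirlingSecond k l • M l s := by
        rw [iteratedDeriv_eq_sum_stirlingSecond hM, smul_smul, ← mul_pow, neg_one_mul, neg_neg,
          one_pow, one_smul]
    _ = ∑ l ∈ Icc 1 k, stirlingSecond k l • M l s := by
        obtain ⟨m, rfl⟩ := Nat.exists_eq_add_of_le' hk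
        rw [sum_range_eq_add_Ico _ (Nat.add_one_pos _), Nat.stirlingSecond_succ_zero, zero_smul,
          zero_add, Ico_add_one_right_eq_Icc]
    _ = ∑ l ∈ Icc 1 k, a l k • M l s := by
        refine sum_congr rfl fun l hl ↦ ?_
        obtain ⟨one_le, le_k⟩ := mem_Icc.mp hl
        rw [eq_stirlingSecond_of_rec ha1 hak harec one_le le_k, Nat.cast_smul_eq_nsmul]

end

theorem stmt4 (M : ℕ → ℝ → ℝ)
    (hsmooth : ∀ k, ContDiff ℝ (⊤ : ℕ∞) (M k))
    (hrec : ∀ k, 1 ≤ k → ∀ s : ℝ, deriv (M k) s = -(k : ℝ) * M k s - M (k + 1) s)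
    (h0 : ∀ s : ℝ, deriv (M 0) s = -(M 1 s))
    (a : ℕ → ℕ → ℝ)
    (ha1 : ∀ k, 1 ≤ k → a 1 k = 1)
    (hak : ∀ k, 1 ≤ k → a k k = 1)
    (harec : ∀ k l, 2 ≤ l → l ≤ k - 1 → a l k = a (l - 1) (k - 1) + l * a l (k - 1)) :
    ∀ k, 1 ≤ k →
      (-1 : ℝ) ^ k * iteratedDeriv k (M 0) 0 = ∑ l ∈ Finset.Icc 1 k, a l k * M l 0 :=
  fun k hk ↦ stmt4_general M (fun l ↦ (hsmooth l).differentiable (by simp)) hrec h0 a ha1 hak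
    (fun k l hl hlk ↦ harec k l hl (Nat.le_sub_one_of_lt hlk)) k hk 0
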